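/- Shifted partial fraction decomposition: let a_1, a_2, c_1, c_2 be positive integers, b_1, b_2 nonnegative integers, and i_1, i_2 integers with i_1 > i_2 ≥ 1. Then 1/((a_1(i_1−i_2)+b_1)^{c_1} (a_2 i_2 + b_2)^{c_2}) = Σ_{j=1}^{c_1} binom(c_1+c_2−j−1, c_2−1) · a_1^{c_2} a_2^{c_1−j} · (a_1 b_2 + a_2 b_1 + i_1 a_1 a_2)^{−(c_1+c_2−j)} · (a_1(i_1−i_2)+b_1)^{−j} + Σ_{j=1}^{c_2} binom(c_1+c_2−j−1, c_1−1) · a_1^{c_2−j} a_2^{c_1} · (a_1 b_2 + a_2 b_1 + i_1 a_1 a_2)^{−(c_1+c_2−j)} · (a_2 i_2 + b_2)^{−j}. -/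

import Mathlib

/-!
Put `x = a₁(i₁ - i₂) + b₁`, `y = a₂ i₂ + b₂` and `N = a₁ b₂ + a₂ b₁ + i₁ a₁ a₂`. Then
`N = a₂ x + a₁ y`, so `p = a₂ x / N` and `q = a₁ y / N` satisfy `p + q = 1`. Dividing the
Chaundy–Bullard identity for `p` and `q` by `x ^ c₁ * y ^ c₂` and substituting `j = c₁ - k`,
respectively `j = c₂ - k`, gives the decomposition. The Chaundy–Bullard identity itself follows by
induction, since multiplying a truncated negative binomial series by `1 - p` lowers its order by
one, up to a boundary term.
-/

open Finset

section CommRing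

variable {R : Type*} [CommRing R]

theorem one_sub_mul_sum_range_choose_mul_pow (p : R) (n m : ℕ) :
    (1 - p) * ∑ k ∈ range m, ((n + 1 + k).choose (n + 1) : R) * p ^ k =
      ∑ k ∈ range m, ((n + k).choose n : R) * p ^ k - ((n + m).choose (n + 1) : R) * p ^ m := by
  induction m with
  | zero => simp
  | succ m ih =>
    have pascal : ((n + 1 + m).choose (n + 1) : R) =
        (n + m).choose n + (n + m).choose (n + 1) := by
      rw [Nat.add_right_comm, Nat.choose_succ_succ, Nat.cast_add]
    rw [sum_range_succ, mul_add, ih, sum_range_succ, ← add_assoc n m 1, Nat.add_right_comm n m 1,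
      pascal]
    ring

theorem chaundy_bullard_identity {p q : R} (h : p + q = 1) (m n : ℕ) :
    q ^ (n + 1) * ∑ k ∈ range (m + 1), ((n + k).choose n : R) * p ^ k +
      p ^ (m + 1) * ∑ k ∈ range (n + 1), ((m + k).choose m : R) * q ^ k = 1 := by
  obtain rfl : q = 1 - p := eq_sub_of_add_eq' h
  induction n with
  | zero => simp [mul_neg_geom_sum]
  | succ n ih =>
    have choose_symm : ((n + (m + 1)).choose (n + 1) : R) = (m + (n + 1)).choose m := by
      rw [← add_assoc, Nat.add_right_comm, add_comm m, Nat.choose_symm_add]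
    rw [pow_succ, mul_assoc, one_sub_mul_sum_range_choose_mul_pow, choose_symm,
      sum_range_succ _ (n + 1)]
    linear_combination ih

end CommRing

theorem sum_Icc_one_eq_sum_range_sub {M : Type*} [AddCommMonoid M] (f : ℕ → M) (c : ℕ) :
    ∑ j ∈ Icc 1 c, f j = ∑ k ∈ range c, f (c - k) := by
  rw [range_eq_Ico, sum_Ico_reflect f 0 c.le_succ, Nat.add_sub_cancel_left, Nat.sub_zero,
    Ico_add_one_right_eq_Icc]

section Field

variable {K : Type*} [Field K]

theorem sum_Icc_choose_mul_div_pow_eq (a b N : K) {x y : K} (hx : x ≠ 0) (hy : y ≠ 0) (c n : ℕ) :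
    ∑ j ∈ Icc 1 c, ((c + (n + 1) - j - 1).choose n : K) * a ^ (n + 1) * b ^ (c - j) /
        N ^ (c + (n + 1) - j) / x ^ j =
      ((a * y / N) ^ (n + 1) * ∑ k ∈ range c, ((n + k).choose n : K) * (b * x / N) ^ k) /
        (x ^ c * y ^ (n + 1)) := by
  rw [sum_Icc_one_eq_sum_range_sub, mul_sum, sum_div]
  refine sum_congr rfl fun k hk ↦ ?_
  obtain ⟨j, rfl⟩ := Nat.exists_eq_add_of_le (mem_range.mp hk).le
  have top_index : k + j + (n + 1) - j - 1 = n + k := by omega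
  have N_exponent : k + j + (n + 1) - j = n + 1 + k := by omega
  rw [Nat.add_sub_cancel_left, Nat.add_sub_cancel, top_index, N_exponent]
  simp only [div_pow, mul_pow, pow_add]
  field_simp

theorem shifted_partial_fraction_decomposition_general (a₁ a₂ : K) {x y : K}
    (hx : x ≠ 0) (hy : y ≠ 0) (hN : a₂ * x + a₁ * y ≠ 0) {c₁ c₂ : ℕ} (hc₁ : 0 < c₁)
    (hc₂ : 0 < c₂) :
    1 / (x ^ c₁ * y ^ c₂) =
      (∑ j ∈ Icc 1 c₁, ((c₁ + c₂ - j - 1).choose (c₂ - 1) : K) * a₁ ^ c₂ * a₂ ^ (c₁ - j) /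
          (a₂ * x + a₁ * y) ^ (c₁ + c₂ - j) / x ^ j) +
        ∑ j ∈ Icc 1 c₂, ((c₁ + c₂ - j - 1).choose (c₁ - 1) : K) * a₁ ^ (c₂ - j) * a₂ ^ c₁ /
          (a₂ * x + a₁ * y) ^ (c₁ + c₂ - j) / y ^ j := by
  obtain ⟨m, rfl⟩ := Nat.exists_eq_add_one.mpr hc₁
  obtain ⟨n, rfl⟩ := Nat.exists_eq_add_one.mpr hc₂
  have weights_sum : a₂ * x / (a₂ * x + a₁ * y) + a₁ * y / (a₂ * x + a₁ * y) = 1 := by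
    rw [← add_div, div_self hN]
  simp only [Nat.add_sub_cancel, mul_right_comm _ (a₁ ^ (n + 1 - _)) (a₂ ^ (m + 1))]
  rw [sum_Icc_choose_mul_div_pow_eq a₁ a₂ _ hx hy, add_comm (m + 1) (n + 1),
    sum_Icc_choose_mul_div_pow_eq a₂ a₁ _ hy hx, mul_comm (y ^ (n + 1)), ← add_div,
    chaundy_bullard_identity weights_sum]

end Field

/-- Shifted partial fraction decomposition of
`1/((a₁(i₁−i₂)+b₁)^{c₁} (a₂ i₂ + b₂)^{c₂})`. -/
theorem shifted_partial_fraction_decomposition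
    (a₁ a₂ c₁ c₂ b₁ b₂ : ℕ) (i₁ i₂ : ℤ)
    (ha₁ : 0 < a₁) (ha₂ : 0 < a₂) (hc₁ : 0 < c₁) (hc₂ : 0 < c₂)
    (hi₂ : 1 ≤ i₂) (hi : i₂ < i₁) :
    1 / (((a₁ : ℝ) * ((i₁ : ℝ) - (i₂ : ℝ)) + (b₁ : ℝ)) ^ c₁ *
          ((a₂ : ℝ) * (i₂ : ℝ) + (b₂ : ℝ)) ^ c₂) =
      (∑ j ∈ Finset.Icc 1 c₁, (Nat.choose (c₁ + c₂ - j - 1) (c₂ - 1) : ℝ) *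
          (a₁ : ℝ) ^ c₂ * (a₂ : ℝ) ^ (c₁ - j) /
          ((a₁ : ℝ) * (b₂ : ℝ) + (a₂ : ℝ) * (b₁ : ℝ) +
              (i₁ : ℝ) * (a₁ : ℝ) * (a₂ : ℝ)) ^ (c₁ + c₂ - j) /
          ((a₁ : ℝ) * ((i₁ : ℝ) - (i₂ : ℝ)) + (b₁ : ℝ)) ^ j)
      + ∑ j ∈ Finset.Icc 1 c₂, (Nat.choose (c₁ + c₂ - j - 1) (c₁ - 1) : ℝ) *
          (a₁ : ℝ) ^ (c₂ - j) * (a₂ : ℝ) ^ c₁ /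
          ((a₁ : ℝ) * (b₂ : ℝ) + (a₂ : ℝ) * (b₁ : ℝ) +
              (i₁ : ℝ) * (a₁ : ℝ) * (a₂ : ℝ)) ^ (c₁ + c₂ - j) /
          ((a₂ : ℝ) * (i₂ : ℝ) + (b₂ : ℝ)) ^ j := by
  have hx : 0 < (a₁ : ℝ) * (i₁ - i₂) + b₁ := by
    have : (0 : ℝ) < i₁ - i₂ := sub_pos.mpr (Int.cast_lt.mpr hi)
    positivity
  have hy : 0 < (a₂ : ℝ) * i₂ + b₂ := by
    have : (0 : ℝ) < i₂ := Int.cast_pos.mpr hi₂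
    positivity
  have hN : (a₁ : ℝ) * b₂ + a₂ * b₁ + i₁ * a₁ * a₂ =
      a₂ * (a₁ * (i₁ - i₂) + b₁) + a₁ * (a₂ * i₂ + b₂) := by ring
  rw [hN]
  exact shifted_partial_fraction_decomposition_general _ _ hx.ne' hy.ne' (by positivity) hc₁ hc₂
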